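/- arXiv:2403.18653 — 2 statements merged into one kernel-verified Lean document; each statement's English description precedes it below -/
import Mathlib

section
/- Let p be a prime and X a finite indecomposable cycle set with |X| = p² that is retractable, i.e. there exist x ≠ y in X with σ_x = σ_y. Then X is isomorphic to one of the following: (1) ℤ_{p²} with x·y = y+1; (2) ℤ_p × ℤ_p with (a,x)·(b,y) = (b+1, y + χ₀(b)·S + Φ(b−a)) for some non-constant map Φ : ℤ_p → ℤ_p with Φ(0) = 0 and some S ∈ ℤ_p. Moreover, in case (2) the parameters (S,Φ) and (S′,Φ′) define isomorphic cycle sets if and only if S′ = αS and Φ′ = αΦ for some α ∈ ℤ_p ∖ {0}. -/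
/-- A (non-degenerate) cycle set: a set with a binary operation satisfying
(C1) `(x·y)·(x·z) = (y·x)·(y·z)`, (C2) each left translation is bijective and
(C3) the square map `x ↦ x·x` is bijective. -/
structure CycleSet (X : Type*) where
  op : X → X → X
  c1 : ∀ x y z : X, op (op x y) (op x z) = op (op y x) (op y z)
  c2 : ∀ x : X, Function.Bijective (op x)
  c3 : Function.Bijective (fun x : X => op x x)

namespace CycleSet

variable {X Y : Type*}

/-- The permutation `σ_x : y ↦ x·y`. -/
noncomputable def sigma (C : CycleSet X) (x : X) : Equiv.Perm X :=
  Equiv.ofBijective (C.op x) (C.c2 x)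

/-- The permutation group `𝒢(X)` generated by all `σ_x`. -/
noncomputable def permGroup (C : CycleSet X) : Subgroup (Equiv.Perm X) :=
  Subgroup.closure (Set.range C.sigma)

/-- A cycle set is indecomposable if `𝒢(X)` acts transitively on `X`. -/
def Indecomposable (C : CycleSet X) : Prop :=
  ∀ x y : X, ∃ g ∈ C.permGroup, g x = y

/-- A cycle set is irretractable if `σ_x = σ_y` implies `x = y`. -/
def Irretractable (C : CycleSet X) : Prop :=
  ∀ x y : X, C.op x = C.op y → x = y

/-- `f` is an isomorphism of cycle sets from `C` to `D`. -/
def IsIso (C : CycleSet X) (D : CycleSet Y) (f : X → Y) : Prop :=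
  Function.Bijective f ∧ ∀ x y : X, f (C.op x y) = D.op (f x) (f y)

/-- Two cycle sets are isomorphic if there is an isomorphism between them. -/
def Iso (C : CycleSet X) (D : CycleSet Y) : Prop :=
  ∃ f : X → Y, C.IsIso D f

end CycleSet

/-
An indecomposable cycle set of prime order is a cyclic shift. Its permutation group is the
multiplicative group of a brace whose two groups have the same order, with `p`-part `p`, and a
`p`-cycle acts trivially on the `p`-part of the additive group. Hence the length of an expression
in the `σ x` is well defined modulo `p`. The kernel of this degree map has order prime to `p`, so,
being normal in a transitive group on `p` points, it acts trivially, and all `σ x` coincide.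

The order of the retraction of `X` divides `p ^ 2`. If it is `1`, then `X` is a shift; it is not
`p ^ 2`, as `X` is retractable. If it is `p`, the retraction is `ℤ/p` with the shift. The
permutations fixing every class form an abelian normal subgroup of index `p`, whence a central
subgroup of order `p` that acts simply transitively on each class. In coordinates adapted to this
action, (C1) becomes a cocycle identity: the operation is determined by its diagonal and by a
function `Φ` of the difference of the classes. A section closed under squaring outside the class
of `0` concentrates the diagonal in a single value `S`.

An isomorphism between two cycle sets of the second kind is a translation in the first coordinate
and affine in the second, with slope `α` taking `Φ` to `Φ'`; summing over all classes gives
`S' = α S`.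
-/

section PrimeOrder

variable {p r : ℕ}

theorem index_ker_eq_of_apply_eq_ofAdd_one {G : Type*} [Group G] {n : ℕ}
    {d : G →* Multiplicative (ZMod n)} {s : G} (hs : d s = .ofAdd 1) : d.ker.index = n := by
  have hsurj : Function.Surjective d := by
    intro k
    obtain ⟨i, hi⟩ := ZMod.intCast_surjective k.toAdd
    exact ⟨s ^ i, by rw [map_zpow, hs, ← ofAdd_zsmul, zsmul_one, hi, ofAdd_toAdd]⟩
  rw [Subgroup.index_ker, MonoidHom.range_eq_top.2 hsurj, Subgroup.card_top]
  exact Nat.card_zmod n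

theorem card_perm_subgroup_eq_prime_mul {X : Type*} (hp : p.Prime) (hX : Nat.card X = p)
    (G : Subgroup (Equiv.Perm X)) [MulAction.IsPretransitive G X] :
    ∃ r, Nat.card G = p * r ∧ ¬ p ∣ r := by
  obtain ⟨⟨x⟩, hfin⟩ := Nat.card_pos_iff.1 (hX ▸ hp.pos)
  obtain ⟨r, hr⟩ : p ∣ Nat.card G := by
    rw [← hX, ← MulAction.index_stabilizer_of_transitive G x]
    exact Subgroup.index_dvd_card _
  refine ⟨r, hr, fun hdvd => ?_⟩
  have card_dvd : p * r ∣ p * (p - 1).factorial := by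
    rw [Nat.mul_factorial_pred hp.ne_zero, ← hr, ← hX, ← Nat.card_perm]
    exact G.card_subgroup_dvd_card
  have := hp.dvd_factorial.1 (hdvd.trans (Nat.dvd_of_mul_dvd_mul_left hp.pos card_dvd))
  have := hp.pos
  omega

theorem exists_pow_apply_eq_of_orderOf_eq_prime {X : Type*} (hp : p.Prime) (hX : Nat.card X = p)
    {t : Equiv.Perm X} (ht : orderOf t = p) (x y : X) : ∃ i : ℕ, (t ^ i) x = y := by
  classical
  have := Nat.finite_of_card_ne_zero (hX ▸ hp.ne_zero)
  have := Fintype.ofFinite X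
  rw [Nat.card_eq_fintype_card] at hX
  have hcycle : t.IsCycle := Equiv.Perm.isCycle_of_prime_order'' (hX.symm ▸ hp) (ht.trans hX.symm)
  have hsupp : t.support = Finset.univ := by
    rw [← Finset.card_eq_iff_eq_univ, ← hcycle.orderOf, ht, hX]
  have moves (z : X) : t z ≠ z := Equiv.Perm.mem_support.1 (hsupp ▸ Finset.mem_univ z)
  exact hcycle.exists_pow_eq (moves x) (moves y)

theorem smul_eq_self_of_normal_of_prime_card {G X : Type*} [Group G] [MulAction G X]
    [MulAction.IsPretransitive G X] (hp : p.Prime) (hX : Nat.card X = p) (N : Subgroup G)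
    [N.Normal] (hN : ¬ p ∣ Nat.card N) {g : G} (hg : g ∈ N) (x : X) : g • x = x := by
  have : MulAction.IsPreprimitive G X := MulAction.IsPreprimitive.of_prime_card (hX.symm ▸ hp)
  have hfixed : MulAction.fixedPoints N X = .univ := by
    by_contra hne
    have := MulAction.IsQuasiPreprimitive.isPretransitive_of_normal hne
    apply hN
    rw [← hX, ← MulAction.index_stabilizer_of_transitive N x]
    exact Subgroup.index_dvd_card _
  exact (hfixed ▸ Set.mem_univ x : x ∈ MulAction.fixedPoints N X) ⟨g, hg⟩

section Torsion

variable {A : Type*} [AddCommGroup A]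

theorem prime_nsmul_mem_zmultiples (hp : p.Prime) (hA : Nat.card A = p * r) {b : A}
    (hb : addOrderOf b = p) (a : A) : r • a ∈ AddSubgroup.zmultiples b := by
  have hindex : (AddSubgroup.zmultiples b).index = r := by
    have := (AddSubgroup.zmultiples b).card_mul_index
    rw [Nat.card_zmultiples, hb, hA] at this
    exact Nat.eq_of_mul_eq_mul_left hp.pos this
  exact hindex ▸ AddSubgroup.nsmul_index_mem _ a

theorem exists_nsmul_ne_zero_of_card_eq_prime_mul [Finite A] (hp : p.Prime)
    (hA : Nat.card A = p * r) (hr : ¬ p ∣ r) : ∃ b : A, r • b ≠ 0 := by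
  have := Fact.mk hp
  obtain ⟨b, hb⟩ := exists_prime_addOrderOf_dvd_card' (G := A) p (hA ▸ dvd_mul_right p r)
  exact ⟨b, fun h => hr (hb ▸ addOrderOf_dvd_of_nsmul_eq_zero h)⟩

/- By Fermat, an automorphism of order dividing `p` acts trivially on a cyclic group of
order `p`. -/
theorem smul_eq_self_of_addOrderOf_eq_prime {M : Type*} [Monoid M] [DistribMulAction M A]
    (hp : p.Prime) {g : M} (hg : g ^ p = 1) {b : A} (hb : addOrderOf b = p)
    (h : g • b ∈ AddSubgroup.zmultiples b) : g • b = b := by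
  have := Fact.mk hp
  obtain ⟨k, hk⟩ := AddSubgroup.mem_zmultiples_iff.1 h
  have pow_smul_eq (i : ℕ) : g ^ i • b = k ^ i • b := by
    induction i with
    | zero => simp
    | succ i ih => rw [pow_succ', mul_smul, ih, smul_comm g, ← hk, smul_smul, pow_succ]
  have hkp : k ^ p • b = (1 : ℤ) • b := by rw [← pow_smul_eq, hg, one_smul, one_zsmul]
  rw [zsmul_eq_zsmul_iff_modEq, hb, ← ZMod.intCast_eq_intCast_iff, Int.cast_pow,
    ZMod.pow_card] at hkp
  rw [← hk, ← one_zsmul b, smul_smul, mul_one, zsmul_eq_zsmul_iff_modEq, hb,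
    ← ZMod.intCast_eq_intCast_iff, hkp]

theorem smul_nsmul_eq_of_pow_prime_eq_one {M : Type*} [Monoid M] [DistribMulAction M A]
    (hp : p.Prime) (hA : Nat.card A = p * r) (hr : ¬ p ∣ r) {g : M} (hg : g ^ p = 1) (a : A) :
    g • r • a = r • a := by
  have := Fact.mk hp
  by_cases ha : r • a = 0
  · rw [ha, smul_zero]
  have horder : addOrderOf (r • a) = p := by
    refine addOrderOf_eq_prime ?_ ha
    rw [← mul_nsmul', ← hA, card_nsmul_eq_zero']
  obtain ⟨s, hs⟩ := exists_nsmul_eq_self_of_coprime (x := r • a) (n := r)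
    (horder ▸ ((Nat.Prime.coprime_iff_not_dvd hp).2 hr).symm)
  refine smul_eq_self_of_addOrderOf_eq_prime hp hg horder ?_
  have g_smul : g • r • a = s • r • g • r • a := by rw [smul_comm r g, smul_comm s g, hs]
  rw [g_smul]
  exact nsmul_mem (prime_nsmul_mem_zmultiples hp hA horder _) s

end Torsion

end PrimeOrder

section TransitiveGroup

variable {p : ℕ} {G X : Type*} [Group G]

theorem exists_ne_one_mem_inf_center [Finite G] (hp : p.Prime) (hG : IsPGroup p G)
    (N : Subgroup G) [N.Normal] (hN : p ∣ Nat.card N) : ∃ z ∈ N ⊓ Subgroup.center G, z ≠ 1 := by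
  have := Fact.mk hp
  have hconj : IsPGroup p (ConjAct G) := hG.of_equiv ConjAct.toConjAct
  obtain ⟨z, hz, hz1⟩ :=
    hconj.exists_fixed_point_of_prime_dvd_card_of_fixed_point N hN (a := 1) smul_one
  refine ⟨z, ⟨z.2, ?_⟩, fun h => hz1 (Subtype.ext h.symm)⟩
  have hfixed : (z : G) ∈ MulAction.fixedPoints (ConjAct G) G :=
    fun g => congrArg Subtype.val (hz g)
  rwa [ConjAct.fixedPoints_eq_center] at hfixed

variable [MulAction G X] [MulAction.IsPretransitive G X]

theorem relIndex_stabilizer_eq {k : ℕ} {N : Subgroup G} (hN : N.index ≠ 0)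
    (hX : Nat.card X = k * N.index) {x : X} (hx : MulAction.stabilizer G x ≤ N) :
    (MulAction.stabilizer G x).relIndex N = k := by
  have := Subgroup.relIndex_mul_index hx
  rw [MulAction.index_stabilizer_of_transitive, hX] at this
  exact Nat.eq_of_mul_eq_mul_right (Nat.pos_of_ne_zero hN) this

variable [FaithfulSMul G X]

theorem eq_one_of_mem_center_of_smul_eq_self {z : G} (hz : z ∈ Subgroup.center G) {x : X}
    (hx : z • x = x) : z = 1 := by
  refine eq_of_smul_eq_smul (α := X) fun y => ?_
  obtain ⟨g, rfl⟩ := MulAction.exists_smul_eq G x y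
  rw [one_smul, ← mul_smul, ← Subgroup.mem_center_iff.1 hz g, mul_smul, hx]

theorem pow_eq_one_of_stabilizer_le {k : ℕ} (N : Subgroup G) [IsMulCommutative N]
    (hN : N.index ≠ 0) (hX : Nat.card X = k * N.index)
    (hstab : ∀ x : X, MulAction.stabilizer G x ≤ N) {g : G} (hg : g ∈ N) : g ^ k = 1 := by
  refine eq_of_smul_eq_smul (α := X) fun x => ?_
  have := Subgroup.normal_of_isMulCommutative ((MulAction.stabilizer G x).subgroupOf N)
  rw [one_smul, ← relIndex_stabilizer_eq hN hX (hstab x)]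
  exact Subgroup.pow_index_mem ((MulAction.stabilizer G x).subgroupOf N) ⟨g, hg⟩

/- Since `N` has exponent `p` and index `p`, the group is a `p`-group, so `N` meets the center. -/
theorem exists_central_subgroup_card_eq_prime [Finite G] (hp : p.Prime)
    (hX : Nat.card X = p * p) (N : Subgroup G) [N.Normal] [IsMulCommutative N]
    (hN : N.index = p) (hstab : ∀ x : X, MulAction.stabilizer G x ≤ N) :
    ∃ Z ≤ N ⊓ Subgroup.center G, Nat.card Z = p := by
  have := Fact.mk hp
  have pow_eq_one {g : G} (hg : g ∈ N) : g ^ p = 1 :=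
    pow_eq_one_of_stabilizer_le N (hN ▸ hp.ne_zero) (by rwa [hN]) hstab hg
  have hG : IsPGroup p G := fun g =>
    ⟨2, by rw [sq, pow_mul, pow_eq_one (hN ▸ N.pow_index_mem g)]⟩
  have hdvd : p ∣ Nat.card N := by
    obtain ⟨x⟩ : Nonempty X := (Nat.card_pos_iff.1 (hX ▸ Nat.mul_pos hp.pos hp.pos)).1
    have hrel := relIndex_stabilizer_eq (k := p) (hN ▸ hp.ne_zero) (by rwa [hN]) (hstab x)
    exact hrel ▸ Subgroup.relIndex_dvd_card _ _
  obtain ⟨z, hz, hz1⟩ := exists_ne_one_mem_inf_center hp hG N hdvd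
  exact ⟨Subgroup.zpowers z, Subgroup.zpowers_le.2 hz,
    (Nat.card_zpowers z).trans (orderOf_eq_prime (pow_eq_one hz.1) hz1)⟩

end TransitiveGroup

section FreeAction

variable {A X Y : Type*} [AddGroup A] [AddAction A X] [IsCancelVAdd A X] {π : X → Y} {s : Y → X}

theorem injective_vadd_section (hinv : ∀ (a : A) x, π (a +ᵥ x) = π x) (hs : ∀ b, π (s b) = b) :
    Function.Injective fun u : Y × A => u.2 +ᵥ s u.1 := by
  rintro ⟨b, y⟩ ⟨b', y'⟩ h
  have hb : b = b' := by simpa [hinv, hs] using congrArg π h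
  subst hb
  exact Prod.ext rfl (IsCancelVAdd.right_cancel _ _ _ h)

theorem bijective_vadd_section (hinv : ∀ (a : A) x, π (a +ᵥ x) = π x) (hs : ∀ b, π (s b) = b)
    (htrans : ∀ x y, π x = π y → ∃ a : A, a +ᵥ x = y) :
    Function.Bijective fun u : Y × A => u.2 +ᵥ s u.1 := by
  refine ⟨injective_vadd_section hinv hs, fun x => ?_⟩
  obtain ⟨a, ha⟩ := htrans (s (π x)) x (hs _)
  exact ⟨(π x, a), ha⟩

theorem exists_vadd_eq_of_card [Finite X] (hX : Nat.card X = Nat.card Y * Nat.card A)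
    (hinv : ∀ (a : A) x, π (a +ᵥ x) = π x) (hsurj : Function.Surjective π) {x y : X}
    (hxy : π x = π y) : ∃ a : A, a +ᵥ x = y := by
  obtain ⟨s, hs⟩ := hsurj.hasRightInverse
  have hinj := injective_vadd_section hinv hs
  have := Finite.of_injective _ hinj
  have hbij := (Nat.bijective_iff_injective_and_card _).2
    ⟨hinj, (Nat.card_prod Y A).trans hX.symm⟩
  obtain ⟨⟨b, a⟩, rfl⟩ := hbij.2 x
  obtain ⟨⟨b', a'⟩, rfl⟩ := hbij.2 y
  have hb : b = b' := by simpa [hinv, hs b, hs b'] using hxy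
  exact ⟨a' - a, by rw [← add_vadd, sub_add_cancel, hb]⟩

end FreeAction

section ZModFunctions

theorem exists_eq_add_of_cocycle {A : Type*} [AddCommGroup A] {n : ℕ} [NeZero n]
    {f : ZMod n → ZMod n → A}
    (hf : ∀ a b c, f a c + f (b + 1) (c + 1) = f b c + f (a + 1) (c + 1)) :
    ∃ Φ : ZMod n → A, Φ 0 = 0 ∧ ∀ a b, f a b = f b b + Φ (b - a) := by
  let φ (a c : ZMod n) : A := f a c - f c c
  have φ_succ (a c : ZMod n) : φ (a + 1) (c + 1) = φ a c := by
    rw [sub_eq_sub_iff_add_eq_add, hf a c c, add_comm]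
  have φ_add (k : ℕ) (a c : ZMod n) : φ (a + k) (c + k) = φ a c := by
    induction k with
    | zero => simp
    | succ k ih => rw [Nat.cast_succ, ← add_assoc, ← add_assoc, φ_succ, ih]
  refine ⟨φ 0, sub_self _, fun a b => ?_⟩
  have := φ_add a.val 0 (b - a)
  rw [ZMod.natCast_zmod_val, zero_add, sub_add_cancel] at this
  rw [← this, add_sub_cancel]

theorem apply_add_mul_of_apply_add {n : ℕ} [NeZero n] {f : ZMod n → ZMod n} {d e : ZMod n}
    (hf : ∀ c, f (c + d) = f c + e) (c k : ZMod n) : f (c + k * d) = f c + k * e := by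
  simpa using AddConstMapClass.map_add_nsmul (⟨f, hf⟩ : AddConstMap (ZMod n) (ZMod n) d e) c k.val

variable {p : ℕ} [Fact p.Prime]

theorem eq_zero_of_periodic {A : Type*} {f : ZMod p → A} {d : ZMod p} (hd : Function.Periodic f d)
    (hf : ∃ i j, f i ≠ f j) : d = 0 := by
  obtain ⟨i, j, hij⟩ := hf
  by_contra hne
  have := hd.nsmul ((j - i) / d).val i
  rw [nsmul_eq_mul, ZMod.natCast_zmod_val, div_mul_cancel₀ _ hne, add_sub_cancel] at this
  exact hij this.symm

theorem exists_mul_of_apply_add_comp_eq {ι : Type*} [Nonempty ι] {Φ Φ' : ZMod p → ZMod p}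
    {h : ι → ZMod p → ZMod p} (hstep : ∀ b c y, h b (y + Φ c) = h b y + Φ' c)
    (hΦ' : ∃ i, Φ' i ≠ 0) :
    ∃ α ≠ 0, (∀ b y, h b y = h b 0 + α * y) ∧ ∀ i, Φ' i = α * Φ i := by
  obtain ⟨b₀⟩ := ‹Nonempty ι›
  obtain ⟨c, hc'⟩ := hΦ'
  have hc : Φ c ≠ 0 := fun hc => hc' (by simpa [hc] using hstep b₀ c 0)
  have linear (b : ι) (y : ZMod p) : h b y = h b 0 + Φ' c / Φ c * y := by
    have := apply_add_mul_of_apply_add (hstep b c) 0 (y / Φ c)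
    rw [div_mul_cancel₀ _ hc, zero_add] at this
    rw [this, div_mul_comm]
  refine ⟨Φ' c / Φ c, div_ne_zero hc' hc, linear, fun i => ?_⟩
  have := hstep b₀ i 0
  rw [zero_add, linear b₀ (Φ i)] at this
  exact (add_left_cancel this).symm

end ZModFunctions

namespace CycleSet

variable {X Y : Type*}

theorem ext_op {C D : CycleSet X} (h : ∀ x y, C.op x y = D.op x y) : C = D := by
  cases C
  cases D
  congr
  exact funext₂ h

/-- Homomorphisms of cycle sets. -/
def IsHom (C : CycleSet X) (D : CycleSet Y) (f : X → Y) : Prop :=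
  ∀ x y, f (C.op x y) = D.op (f x) (f y)

theorem iso_of_equiv {C : CycleSet X} {D : CycleSet Y} (e : Y ≃ X) (he : D.IsHom C e) :
    C.Iso D := by
  refine ⟨e.symm, e.symm.bijective, fun x y => ?_⟩
  rw [Equiv.symm_apply_eq, he, e.apply_symm_apply, e.apply_symm_apply]

theorem Iso.op_eq_op {C : CycleSet X} {D : CycleSet Y} (h : C.Iso D)
    (hD : ∀ u v, D.op u = D.op v) (x y : X) : C.op x = C.op y := by
  obtain ⟨f, hf, hfop⟩ := h
  funext z
  apply hf.injective
  rw [hfop, hfop, hD]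

theorem sigma_apply (C : CycleSet X) (x y : X) : C.sigma x y = C.op x y := rfl

theorem sigma_eq_sigma_iff (C : CycleSet X) {x y : X} :
    C.sigma x = C.sigma y ↔ C.op x = C.op y :=
  DFunLike.coe_injective.eq_iff.symm

theorem sigma_mem_permGroup (C : CycleSet X) (x : X) : C.sigma x ∈ C.permGroup :=
  Subgroup.subset_closure ⟨x, rfl⟩

theorem Indecomposable.isPretransitive {C : CycleSet X} (hC : C.Indecomposable) :
    MulAction.IsPretransitive C.permGroup X where
  exists_smul_eq x y := by
    obtain ⟨g, hg, h⟩ := hC x y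
    exact ⟨⟨g, hg⟩, h⟩

section Multiset

theorem sigma_op_mul_sigma (C : CycleSet X) (x y : X) :
    C.sigma (C.op x y) * C.sigma x = C.sigma (C.op y x) * C.sigma y :=
  Equiv.ext (C.c1 x y)

instance (C : CycleSet X) :
    LeftCommutative fun (x : X) (g : Equiv.Perm X) => C.sigma (g x) * g where
  left_comm x y g := by
    simp only [Equiv.Perm.mul_apply, ← mul_assoc]
    exact congrArg (· * g) (C.sigma_op_mul_sigma (g y) (g x))

/-- The permutation attached to a multiset in the structure monoid: the extension of `sigma` for
which `σ (m + n) = σ (σ n (m)) * σ n`, where `σ n (m)` is the image of `m` under `σ n`. -/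
noncomputable def sigmaMultiset (C : CycleSet X) : Multiset X → Equiv.Perm X :=
  Multiset.foldr (fun x g => C.sigma (g x) * g) 1

theorem sigmaMultiset_zero (C : CycleSet X) : C.sigmaMultiset 0 = 1 := rfl

theorem sigmaMultiset_cons (C : CycleSet X) (x : X) (m : Multiset X) :
    C.sigmaMultiset (x ::ₘ m) = C.sigma (C.sigmaMultiset m x) * C.sigmaMultiset m :=
  Multiset.foldr_cons _ _ _ _

theorem sigmaMultiset_singleton (C : CycleSet X) (x : X) : C.sigmaMultiset {x} = C.sigma x :=
  C.sigmaMultiset_cons x 0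

theorem sigmaMultiset_add (C : CycleSet X) (m n : Multiset X) :
    C.sigmaMultiset (m + n) = C.sigmaMultiset (m.map (C.sigmaMultiset n)) * C.sigmaMultiset n := by
  induction m using Multiset.induction with
  | empty => rw [zero_add, Multiset.map_zero, sigmaMultiset_zero, one_mul]
  | cons x m ih =>
    rw [Multiset.cons_add, sigmaMultiset_cons, ih, Multiset.map_cons, sigmaMultiset_cons, mul_assoc,
      Equiv.Perm.mul_apply]

theorem sigmaMultiset_mul (C : CycleSet X) (m n : Multiset X) :
    C.sigmaMultiset m * C.sigmaMultiset n =
      C.sigmaMultiset (m.map (C.sigmaMultiset n).symm + n) := by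
  simp [sigmaMultiset_add]

theorem sigmaMultiset_mem_permGroup (C : CycleSet X) (m : Multiset X) :
    C.sigmaMultiset m ∈ C.permGroup := by
  induction m using Multiset.induction with
  | empty => exact C.permGroup.one_mem
  | cons x m ih =>
    rw [sigmaMultiset_cons]
    exact C.permGroup.mul_mem (C.sigma_mem_permGroup _) ih

theorem exists_sigmaMultiset_eq [Finite X] (C : CycleSet X) {g : Equiv.Perm X}
    (hg : g ∈ C.permGroup) : ∃ m, C.sigmaMultiset m = g := by
  rw [← Subgroup.mem_toSubmonoid, permGroup, Subgroup.closure_toSubmonoid_of_finite] at hg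
  induction hg using Submonoid.closure_induction with
  | mem g hg =>
    obtain ⟨x, rfl⟩ := hg
    exact ⟨{x}, C.sigmaMultiset_singleton x⟩
  | one => exact ⟨0, C.sigmaMultiset_zero⟩
  | mul g h _ _ ihg ihh =>
    obtain ⟨m, rfl⟩ := ihg
    obtain ⟨n, rfl⟩ := ihh
    exact ⟨_, (C.sigmaMultiset_mul m n).symm⟩

theorem IsHom.map_sigmaMultiset {C : CycleSet X} {D : CycleSet Y} {f : X → Y} (hf : C.IsHom D f)
    (m : Multiset X) (x : X) : f (C.sigmaMultiset m x) = D.sigmaMultiset (m.map f) (f x) := by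
  induction m using Multiset.induction generalizing x with
  | empty => rfl
  | cons a m ih =>
    rw [Multiset.map_cons, sigmaMultiset_cons, sigmaMultiset_cons, Equiv.Perm.mul_apply,
      Equiv.Perm.mul_apply, sigma_apply, sigma_apply, hf, ih, ih]

theorem Indecomposable.of_isHom [Finite X] {C : CycleSet X} {D : CycleSet Y}
    (hC : C.Indecomposable) {f : X → Y} (hf : C.IsHom D f) (hs : Function.Surjective f) :
    D.Indecomposable := by
  refine hs.forall₂.2 fun x y => ?_
  obtain ⟨g, hg, rfl⟩ := hC x y
  obtain ⟨m, rfl⟩ := C.exists_sigmaMultiset_eq hg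
  exact ⟨_, D.sigmaMultiset_mem_permGroup _, (hf.map_sigmaMultiset m x).symm⟩

theorem IsHom.card_dvd_card [Finite X] {C : CycleSet X} {D : CycleSet Y} {f : X → Y}
    (hf : C.IsHom D f) (hs : Function.Surjective f) (hC : C.Indecomposable) :
    Nat.card Y ∣ Nat.card X := by
  classical
  have := Finite.of_surjective f hs
  have := Fintype.ofFinite Y
  have fiber_equiv (y y' : Y) : Nat.card {x // f x = y} = Nat.card {x // f x = y'} := by
    obtain ⟨x, rfl⟩ := hs y
    obtain ⟨x', rfl⟩ := hs y'
    obtain ⟨g, hg, rfl⟩ := hC x x'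
    obtain ⟨m, rfl⟩ := C.exists_sigmaMultiset_eq hg
    refine Nat.card_congr ((C.sigmaMultiset m).subtypeEquiv fun u => ?_)
    rw [hf.map_sigmaMultiset, hf.map_sigmaMultiset, EmbeddingLike.apply_eq_iff_eq]
  rcases isEmpty_or_nonempty Y with hY | ⟨⟨y₀⟩⟩
  · have := Function.isEmpty f
    simp
  · rw [← Nat.card_congr (Equiv.sigmaFiberEquiv f), Nat.card_sigma,
      Finset.sum_congr rfl fun y _ => fiber_equiv y y₀]
    simp

end Multiset

section Degree

theorem exists_degreeHom [Finite X] (C : CycleSet X) {n : ℕ}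
    (h : ∀ m m', C.sigmaMultiset m = C.sigmaMultiset m' → (m.card : ZMod n) = m'.card) :
    ∃ d : C.permGroup →* Multiplicative (ZMod n), ∀ m,
      d ⟨C.sigmaMultiset m, C.sigmaMultiset_mem_permGroup m⟩ = .ofAdd (m.card : ZMod n) := by
  choose M hM using fun g : C.permGroup => C.exists_sigmaMultiset_eq g.2
  refine ⟨MonoidHom.mk' (fun g => .ofAdd ((M g).card : ZMod n)) fun a b => ?_, fun m => ?_⟩
  · rw [← ofAdd_add, h (M (a * b)) ((M a).map (C.sigmaMultiset (M b)).symm + M b)]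
    · simp
    · rw [← sigmaMultiset_mul, hM, hM, hM, Subgroup.coe_mul]
  · exact congrArg Multiplicative.ofAdd (h _ _ (hM _))

end Degree

section Shift

variable {X : Type*}

/-- The cycle set `x · y = y + 1` on `ℤ/n`. -/
def shift (n : ℕ) : CycleSet (ZMod n) where
  op _ y := y + 1
  c1 _ _ _ := rfl
  c2 _ := (Equiv.addRight 1).bijective
  c3 := (Equiv.addRight 1).bijective

theorem shift_sigmaMultiset (n : ℕ) (m : Multiset (ZMod n)) (b : ZMod n) :
    (shift n).sigmaMultiset m b = b + m.card := by
  induction m using Multiset.induction with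
  | empty => simp [sigmaMultiset_zero]
  | cons a m ih =>
    rw [sigmaMultiset_cons, Equiv.Perm.mul_apply, sigma_apply, ih, Multiset.card_cons,
      Nat.cast_succ, ← add_assoc]
    rfl

theorem permGroup_eq_zpowers (C : CycleSet X) (h : ∀ x y, C.op x = C.op y) (x : X) :
    C.permGroup = Subgroup.zpowers (C.sigma x) := by
  have hrange : Set.range C.sigma = {C.sigma x} :=
    have : Nonempty X := ⟨x⟩
    Set.range_eq_singleton_iff.2 fun y => C.sigma_eq_sigma_iff.2 (h y x)
  rw [Subgroup.zpowers_eq_closure, permGroup, hrange]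

theorem Indecomposable.iso_shift_of_op_eq_op [Nonempty X] {C : CycleSet X} (hC : C.Indecomposable)
    (h : ∀ x y, C.op x = C.op y) : C.Iso (shift (Nat.card X)) := by
  obtain ⟨x₀⟩ := ‹Nonempty X›
  have mem_orbit (x : X) : x ∈ MulAction.orbit (Subgroup.zpowers (C.sigma x₀)) x₀ := by
    obtain ⟨g, hg, rfl⟩ := hC x₀ x
    rw [C.permGroup_eq_zpowers h x₀] at hg
    exact ⟨⟨g, hg⟩, rfl⟩
  let e := (MulAction.orbitZPowersEquiv (C.sigma x₀) x₀).symm.trans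
    (Equiv.subtypeUnivEquiv mem_orbit)
  have e_apply (k : ℤ) : e k = (C.sigma x₀ ^ k) x₀ :=
    congrArg Subtype.val (MulAction.orbitZPowersEquiv_symm_apply' (C.sigma x₀) x₀ k)
  rw [← Nat.card_congr e, Nat.card_zmod]
  refine iso_of_equiv e fun i j => ?_
  obtain ⟨k, rfl⟩ := ZMod.intCast_surjective j
  calc e ((shift _).op i k)
      = e ((1 + k : ℤ) : ZMod _) := congrArg e (by push_cast; exact add_comm _ _)
    _ = C.op x₀ ((C.sigma x₀ ^ k) x₀) := by rw [e_apply, zpow_one_add]; rfl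
    _ = C.op (e i) (e k) := by rw [h (e i) x₀, e_apply]

end Shift

section AddPermGroup

variable {X : Type*} {p : ℕ}

/-- The additive congruence on multisets identifying those with the same permutation. -/
def permCon (C : CycleSet X) : AddCon (Multiset X) where
  r m n := C.sigmaMultiset m = C.sigmaMultiset n
  iseqv := ⟨fun _ => rfl, fun h => h.symm, fun h h' => h.trans h'⟩
  add' {m k n l} hm hn := by
    have add_right {m k : Multiset X} (n : Multiset X)
        (h : C.sigmaMultiset m = C.sigmaMultiset k) :
        C.sigmaMultiset (m + n) = C.sigmaMultiset (k + n) := by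
      rw [add_comm m, add_comm k, sigmaMultiset_add, sigmaMultiset_add, h]
    rw [add_right n hm, add_comm k, add_comm k, add_right k hn]

/-- The additive group of the permutation brace of a finite cycle set. Its elements are in bijection
with those of `permGroup`. -/
abbrev AddPermGroup (C : CycleSet X) : Type _ := C.permCon.Quotient

theorem addPermGroup_coe_eq_coe {C : CycleSet X} {m n : Multiset X} :
    (m : C.AddPermGroup) = n ↔ C.sigmaMultiset m = C.sigmaMultiset n :=
  C.permCon.eq

theorem card_addPermGroup [Finite X] (C : CycleSet X) :
    Nat.card C.AddPermGroup = Nat.card C.permGroup := by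
  let toPermGroup : C.AddPermGroup → C.permGroup := fun a =>
    AddCon.liftOn a (fun m => ⟨C.sigmaMultiset m, C.sigmaMultiset_mem_permGroup m⟩)
      fun _ _ h => Subtype.ext h
  refine Nat.card_eq_of_bijective toPermGroup ⟨fun a b h => ?_, fun g => ?_⟩
  · induction a, b using AddCon.induction_on₂ with
    | H m n => exact addPermGroup_coe_eq_coe.2 (congrArg Subtype.val h)
  · obtain ⟨m, hm⟩ := C.exists_sigmaMultiset_eq g.2
    exact ⟨m, Subtype.ext hm⟩

instance [Finite X] (C : CycleSet X) : Finite C.AddPermGroup :=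
  Nat.finite_of_card_ne_zero (C.card_addPermGroup ▸ Nat.card_pos.ne')

theorem exists_add_eq_zero [Finite X] (C : CycleSet X) (a : C.AddPermGroup) : ∃ b, b + a = 0 := by
  induction a using AddCon.induction_on with
  | H m =>
    obtain ⟨k, hk⟩ := C.exists_sigmaMultiset_eq
      (C.permGroup.inv_mem (C.sigmaMultiset_mem_permGroup m))
    refine ⟨(k.map (C.sigmaMultiset m).symm : Multiset X), addPermGroup_coe_eq_coe.2 ?_⟩
    rw [← sigmaMultiset_mul, hk, inv_mul_cancel, sigmaMultiset_zero]

noncomputable instance [Finite X] (C : CycleSet X) : Neg C.AddPermGroup where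
  neg a := (C.exists_add_eq_zero a).choose

noncomputable instance [Finite X] (C : CycleSet X) : AddCommGroup C.AddPermGroup where
  neg_add_cancel a := (C.exists_add_eq_zero a).choose_spec
  zsmul := zsmulRec

theorem sigmaMultiset_map_eq_of_eq [Finite X] (C : CycleSet X) {g : Equiv.Perm X}
    (hg : g ∈ C.permGroup) {m m' : Multiset X} (h : C.sigmaMultiset m = C.sigmaMultiset m') :
    C.sigmaMultiset (m.map g) = C.sigmaMultiset (m'.map g) := by
  obtain ⟨n, rfl⟩ := C.exists_sigmaMultiset_eq hg
  apply mul_right_cancel (b := C.sigmaMultiset n)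
  rw [← sigmaMultiset_add, ← sigmaMultiset_add]
  exact C.permCon.add h (C.permCon.refl n)

noncomputable instance [Finite X] (C : CycleSet X) :
    DistribMulAction C.permGroup C.AddPermGroup where
  smul g := C.permCon.lift (C.permCon.mk'.comp (Multiset.mapAddMonoidHom g.1)) fun _ _ h =>
    addPermGroup_coe_eq_coe.2 (C.sigmaMultiset_map_eq_of_eq g.2 h)
  one_smul a := by
    induction a using AddCon.induction_on with
    | H m => exact congrArg _ (Multiset.map_id m)
  mul_smul g h a := by
    induction a using AddCon.induction_on with
    | H m => exact congrArg _ (Multiset.map_map g.1 h.1 m).symm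
  smul_zero g := map_zero (AddCon.lift _ _ _)
  smul_add g := map_add (AddCon.lift _ _ _)

theorem smul_coe_singleton [Finite X] (C : CycleSet X) (g : C.permGroup) (x : X) :
    g • (({x} : Multiset X) : C.AddPermGroup) = ({g.1 x} : Multiset X) := rfl

/- Multiplication by the prime-to-`p` part of the order of the additive group projects it onto its
`p`-part, which has order `p`; a `p`-cycle acts trivially there, so all `r • [x]` coincide. -/
theorem exists_nsmul_coe_eq_card_nsmul [Finite X] (C : CycleSet X) (hp : p.Prime)
    (hX : Nat.card X = p) {r : ℕ} (hG : Nat.card C.permGroup = p * r) (hr : ¬ p ∣ r) :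
    ∃ c : C.AddPermGroup, ∀ m : Multiset X, r • (m : C.AddPermGroup) = m.card • c := by
  have := Fact.mk hp
  obtain ⟨x₀⟩ : Nonempty X := (Nat.card_pos_iff.1 (hX ▸ hp.pos)).1
  obtain ⟨t, ht⟩ := exists_prime_orderOf_dvd_card' (G := C.permGroup) p (hG ▸ dvd_mul_right p r)
  have r_smul_singleton (x : X) :
      r • (({x} : Multiset X) : C.AddPermGroup) = r • (({x₀} : Multiset X) : C.AddPermGroup) := by
    obtain ⟨i, rfl⟩ := exists_pow_apply_eq_of_orderOf_eq_prime hp hX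
      ((Subgroup.orderOf_coe t).trans ht) x₀ x
    have hti : (t ^ i) ^ p = 1 := by rw [pow_right_comm, ← ht, pow_orderOf_eq_one, one_pow]
    rw [← smul_nsmul_eq_of_pow_prime_eq_one hp (C.card_addPermGroup.trans hG) hr hti
      (({x₀} : Multiset X) : C.AddPermGroup), smul_comm, smul_coe_singleton, Subgroup.coe_pow]
  refine ⟨r • (({x₀} : Multiset X) : C.AddPermGroup), fun m => ?_⟩
  induction m using Multiset.induction with
  | empty => rw [AddCon.coe_zero, nsmul_zero, Multiset.card_zero, zero_nsmul]
  | cons x m ih =>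
    rw [← Multiset.singleton_add, AddCon.coe_add, nsmul_add, ih, r_smul_singleton,
      Multiset.card_add, Multiset.card_singleton, add_nsmul, one_nsmul]

theorem natCast_card_eq_of_prime_card [Finite X] (C : CycleSet X) (hp : p.Prime)
    (hX : Nat.card X = p) {r : ℕ} (hG : Nat.card C.permGroup = p * r) (hr : ¬ p ∣ r)
    {m m' : Multiset X} (h : C.sigmaMultiset m = C.sigmaMultiset m') :
    (m.card : ZMod p) = m'.card := by
  have := Fact.mk hp
  have hA : Nat.card C.AddPermGroup = p * r := C.card_addPermGroup.trans hG
  obtain ⟨c, hc⟩ := C.exists_nsmul_coe_eq_card_nsmul hp hX hG hr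
  obtain ⟨x₀⟩ : Nonempty X := (Nat.card_pos_iff.1 (hX ▸ hp.pos)).1
  have c_eq : r • (({x₀} : Multiset X) : C.AddPermGroup) = c := by simp [hc]
  have c_ne_zero : c ≠ 0 := by
    rintro rfl
    obtain ⟨b, hb⟩ := exists_nsmul_ne_zero_of_card_eq_prime_mul hp hA hr
    induction b using AddCon.induction_on with
    | H m => exact hb (by rw [hc, nsmul_zero])
  have order_c : addOrderOf c = p := by
    refine addOrderOf_eq_prime ?_ c_ne_zero
    rw [← c_eq, ← mul_nsmul', ← hA, card_nsmul_eq_zero']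
  have card_nsmul_c : m.card • c = m'.card • c := by
    rw [← hc, ← hc, addPermGroup_coe_eq_coe.2 h]
  rw [ZMod.natCast_eq_natCast_iff, ← order_c]
  exact nsmul_eq_nsmul_iff_modEq.1 card_nsmul_c

theorem Indecomposable.op_eq_op_of_prime_card {C : CycleSet X} (hC : C.Indecomposable)
    (hp : p.Prime) (hX : Nat.card X = p) (x y : X) : C.op x = C.op y := by
  have := Nat.finite_of_card_ne_zero (hX ▸ hp.ne_zero)
  have := hC.isPretransitive
  obtain ⟨r, hG, hr⟩ := card_perm_subgroup_eq_prime_mul hp hX C.permGroup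
  obtain ⟨d, hd⟩ := C.exists_degreeHom fun _ _ => C.natCast_card_eq_of_prime_card hp hX hG hr
  let s (x : X) : C.permGroup := ⟨C.sigma x, C.sigma_mem_permGroup x⟩
  have d_s (x : X) : d (s x) = .ofAdd 1 := by
    simpa [sigmaMultiset_singleton] using hd {x}
  have card_ker : Nat.card d.ker = r := by
    have := d.ker.card_mul_index
    rw [index_ker_eq_of_apply_eq_ofAdd_one (d_s x), hG, mul_comm] at this
    exact Nat.eq_of_mul_eq_mul_left hp.pos this
  have mem_ker : s x * (s y)⁻¹ ∈ d.ker := by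
    rw [MonoidHom.mem_ker, map_mul, map_inv, d_s, d_s, mul_inv_cancel]
  funext z
  have h := smul_eq_self_of_normal_of_prime_card hp hX d.ker (card_ker ▸ hr) mem_ker (s y • z)
  rwa [mul_smul, inv_smul_smul] at h

end AddPermGroup

section Retraction

variable {X : Type*}

theorem op_op_eq_op_op (C : CycleSet X) {x₁ x₂ y₁ y₂ : X} (hx : C.op x₁ = C.op x₂)
    (hy : C.op y₁ = C.op y₂) : C.op (C.op x₁ y₁) = C.op (C.op x₂ y₂) := by
  rw [hx]
  funext z
  obtain ⟨w, rfl⟩ := (C.c2 x₂).2 z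
  rw [C.c1, C.c1 x₂ y₂, hy]

/-- The retraction of a finite cycle set: the induced cycle set on the classes of the relation
`σ x = σ y`. -/
def retraction [Finite X] (C : CycleSet X) : CycleSet (Quotient (Setoid.ker C.op)) where
  op := Quotient.map₂ C.op fun _ _ h _ _ h' => C.op_op_eq_op_op h h'
  c1 := by
    rintro ⟨x⟩ ⟨y⟩ ⟨z⟩
    exact congrArg (Quotient.mk _) (C.c1 x y z)
  c2 := by
    rintro ⟨x⟩
    rw [← Finite.surjective_iff_bijective]
    exact Quotient.mk_surjective.forall.2 fun y =>
      ((C.c2 x).2 y).imp' (Quotient.mk _) fun _ h => congrArg (Quotient.mk _) h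
  c3 := by
    rw [← Finite.surjective_iff_bijective]
    exact Quotient.mk_surjective.forall.2 fun y =>
      (C.c3.2 y).imp' (Quotient.mk _) fun _ h => congrArg (Quotient.mk _) h

theorem isHom_retraction_mk [Finite X] (C : CycleSet X) :
    C.IsHom C.retraction (Quotient.mk (Setoid.ker C.op)) :=
  fun _ _ => rfl

end Retraction

section FibreConstant

variable {X Y : Type*} {C : CycleSet X} {D : CycleSet Y} {f : X → Y}

theorem IsHom.sigmaMultiset_map_of_comp_eq (hf : C.IsHom D f)
    (hfib : ∀ x y, f x = f y → C.op x = C.op y) {g : X → X} (hg : ∀ x, f (g x) = f x)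
    (m : Multiset X) : C.sigmaMultiset (m.map g) = C.sigmaMultiset m := by
  induction m using Multiset.induction with
  | empty => rfl
  | cons a m ih =>
    have hσ : C.sigma (C.sigmaMultiset m (g a)) = C.sigma (C.sigmaMultiset m a) :=
      C.sigma_eq_sigma_iff.2 <| hfib _ _ <| by
        rw [hf.map_sigmaMultiset, hf.map_sigmaMultiset, hg]
    rw [Multiset.map_cons, sigmaMultiset_cons, sigmaMultiset_cons, ih, hσ]

theorem IsHom.mul_comm_of_comp_eq [Finite X] (hf : C.IsHom D f)
    (hfib : ∀ x y, f x = f y → C.op x = C.op y) {g h : Equiv.Perm X} (hgC : g ∈ C.permGroup)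
    (hhC : h ∈ C.permGroup) (hg : ∀ x, f (g x) = f x) (hh : ∀ x, f (h x) = f x) :
    g * h = h * g := by
  obtain ⟨m, rfl⟩ := C.exists_sigmaMultiset_eq hgC
  obtain ⟨n, rfl⟩ := C.exists_sigmaMultiset_eq hhC
  have hmn := C.sigmaMultiset_add m n
  have hnm := C.sigmaMultiset_add n m
  rw [hf.sigmaMultiset_map_of_comp_eq hfib hh] at hmn
  rw [hf.sigmaMultiset_map_of_comp_eq hfib hg] at hnm
  rw [← hmn, ← hnm, add_comm]

end FibreConstant

section CyclicQuotient

variable {X : Type*} {C : CycleSet X} {n p : ℕ}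

theorem IsHom.exists_degreeHom [Finite X] [Nonempty X] {π : X → ZMod n}
    (hπ : C.IsHom (shift n) π) : ∃ d : C.permGroup →* Multiplicative (ZMod n),
      ∀ g x, π (g • x) = π x + (d g).toAdd := by
  have exists_translate (g : C.permGroup) : ∃ k : ZMod n, ∀ x, π (g • x) = π x + k := by
    obtain ⟨m, hm⟩ := C.exists_sigmaMultiset_eq g.2
    refine ⟨m.card, fun x => ?_⟩
    rw [Subgroup.smul_def, Equiv.Perm.smul_def, ← hm, hπ.map_sigmaMultiset, shift_sigmaMultiset,
      Multiset.card_map]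
  choose k hk using exists_translate
  obtain ⟨x⟩ := ‹Nonempty X›
  have k_mul (g h : C.permGroup) : k (g * h) = k g + k h := by
    apply add_left_cancel (a := π x)
    rw [← hk, mul_smul, hk, hk, add_assoc, add_comm (k h)]
  exact ⟨MonoidHom.mk' (fun g => .ofAdd (k g)) fun g h => congrArg _ (k_mul g h), hk⟩

theorem IsHom.exists_central_subgroup [Finite X] (hC : C.Indecomposable) (hp : p.Prime)
    (hX : Nat.card X = p * p) {π : X → ZMod p} (hπ : C.IsHom (shift p) π)
    (hfib : ∀ x y, π x = π y → C.op x = C.op y) :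
    ∃ Z ≤ Subgroup.center C.permGroup, Nat.card Z = p ∧ ∀ z ∈ Z, ∀ x, π (z • x) = π x := by
  have := hC.isPretransitive
  have : Nonempty X := (Nat.card_pos_iff.1 (hX ▸ Nat.mul_pos hp.pos hp.pos)).1
  let x₀ : X := Classical.arbitrary X
  obtain ⟨d, hd⟩ := hπ.exists_degreeHom
  have mem_ker {g : C.permGroup} : g ∈ d.ker ↔ ∀ x, π (g • x) = π x := by
    simp [MonoidHom.mem_ker, hd]
  have d_sigma : d ⟨C.sigma x₀, C.sigma_mem_permGroup x₀⟩ = .ofAdd 1 :=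
    Multiplicative.toAdd.injective (add_left_cancel ((hd _ x₀).symm.trans (hπ x₀ x₀)))
  have : IsMulCommutative d.ker := ⟨⟨fun g h => Subtype.ext <| Subtype.ext <|
    hπ.mul_comm_of_comp_eq hfib g.1.2 h.1.2 (mem_ker.1 g.2) (mem_ker.1 h.2)⟩⟩
  have stabilizer_le (x : X) : MulAction.stabilizer C.permGroup x ≤ d.ker := fun g hg => by
    have h := hd g x
    rw [MulAction.mem_stabilizer_iff.1 hg, left_eq_add] at h
    exact h
  obtain ⟨Z, hZ, hZp⟩ := exists_central_subgroup_card_eq_prime hp hX d.ker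
    (index_ker_eq_of_apply_eq_ofAdd_one d_sigma) stabilizer_le
  exact ⟨Z, hZ.trans inf_le_right, hZp, fun z hz => mem_ker.1 (hZ hz).1⟩

end CyclicQuotient

section Twisted

variable {X A B : Type*} [AddCommGroup A] [AddCommGroup B] {n : ℕ}

/-- The cycle set `(a, x) · (b, y) = (b + 1, y + χ₀(b) S + Φ (b - a))` on `ℤ/n × A`, where `χ₀` is
the indicator function of `0`. -/
def twisted (Φ : ZMod n → A) (S : A) : CycleSet (ZMod n × A) where
  op u v := (v.1 + 1, v.2 + (if v.1 = 0 then S else 0) + Φ (v.1 - u.1))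
  c1 u v w := by
    ext
    · rfl
    · simp only [add_sub_add_right_eq_sub]
      abel
  c2 u := (Equiv.prodShear (Equiv.addRight 1) fun b =>
    (Equiv.addRight (if b = 0 then S else 0)).trans (Equiv.addRight (Φ (b - u.1)))).bijective
  c3 := (Equiv.prodShear (Equiv.addRight 1) fun b =>
    (Equiv.addRight (if b = 0 then S else 0)).trans (Equiv.addRight (Φ (b - b)))).bijective

theorem twisted_op (Φ : ZMod n → A) (S : A) (a b : ZMod n) (x y : A) :
    (twisted Φ S).op (a, x) (b, y) = (b + 1, y + (if b = 0 then S else 0) + Φ (b - a)) :=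
  rfl

theorem twisted_op_eq_op_of_forall_eq {Φ : ZMod n → A} (hΦ : ∀ i j, Φ i = Φ j) (S : A)
    (u v : ZMod n × A) : (twisted Φ S).op u = (twisted Φ S).op v := by
  funext w
  exact congrArg (fun t => (w.1 + 1, w.2 + (if w.1 = 0 then S else 0) + t)) (hΦ _ _)

theorem twisted_iso_map (Φ : ZMod n → A) (S : A) (α : A ≃+ B) :
    (twisted Φ S).Iso (twisted (α ∘ Φ) (α S)) := by
  refine ⟨Prod.map id α, Function.bijective_id.prodMap α.bijective, fun u v => ?_⟩
  ext
  · rfl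
  · simp [twisted, apply_ite α]

variable {C : CycleSet X} {π : X → ZMod n}

theorem IsHom.exists_section [NeZero n] (hπ : C.IsHom (shift n) π) (hs : Function.Surjective π) :
    ∃ s : ZMod n → X, (∀ b, π (s b) = b) ∧ ∀ b ≠ 0, C.op (s b) (s b) = s (b + 1) := by
  obtain ⟨x₁, hx₁⟩ := hs 1
  let T (x : X) : X := C.op x x
  have π_iterate (i : ℕ) : π (T^[i] x₁) = 1 + i := by
    induction i with
    | zero => simp [hx₁]
    | succ i ih =>
      rw [Function.iterate_succ_apply', Nat.cast_succ, ← add_assoc, ← ih]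
      exact hπ _ _
  refine ⟨fun b => T^[(b - 1).val] x₁, fun b => ?_, fun b hb => ?_⟩
  · rw [π_iterate, ZMod.natCast_zmod_val, add_sub_cancel]
  · have val_eq : b.val = (b - 1).val + 1 := by
      have hpos := ZMod.val_pos.2 hb
      have hone : (1 : ZMod n).val = 1 := by
        rw [ZMod.val_one_eq_one_mod, Nat.mod_eq_of_lt (Nat.lt_of_le_of_lt hpos b.val_lt)]
      rw [ZMod.val_sub (hone.le.trans hpos), hone, Nat.sub_add_cancel hpos]
    simp only [add_sub_cancel_right]
    rw [val_eq, Function.iterate_succ_apply']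

variable [AddAction A X] [IsCancelVAdd A X]

theorem IsHom.exists_iso_twisted [NeZero n] (hπ : C.IsHom (shift n) π)
    (hsurj : Function.Surjective π) (hfib : ∀ x y, π x = π y → C.op x = C.op y)
    (hinv : ∀ (a : A) x, π (a +ᵥ x) = π x)
    (hequiv : ∀ (a : A) x y, C.op x (a +ᵥ y) = a +ᵥ C.op x y)
    (htrans : ∀ x y, π x = π y → ∃ a : A, a +ᵥ x = y) :
    ∃ (Φ : ZMod n → A) (S : A), Φ 0 = 0 ∧ C.Iso (twisted Φ S) := by
  obtain ⟨s, hs, s_succ⟩ := hπ.exists_section hsurj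
  have π_op (x y : X) : π (C.op x y) = π y + 1 := hπ x y
  choose f hf using fun a b => htrans (s (b + 1)) (C.op (s a) (s b)) (by rw [π_op, hs, hs])
  have op_op (a b c : ZMod n) : C.op (C.op (s a) (s b)) (C.op (s a) (s c)) =
      (f a c + f (b + 1) (c + 1)) +ᵥ s (c + 1 + 1) := by
    rw [hfib _ (s (b + 1)) (by rw [π_op, hs, hs]), ← hf a c, hequiv, ← hf, add_vadd]
  obtain ⟨Φ, hΦ0, hΦ⟩ := exists_eq_add_of_cocycle (f := f) fun a b c =>
    IsCancelVAdd.right_cancel _ _ (s (c + 1 + 1)) (by rw [← op_op, ← op_op, C.c1])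
  have f_diag (b : ZMod n) : f b b = if b = 0 then f 0 0 else 0 := by
    split_ifs with hb
    · rw [hb]
    · apply IsCancelVAdd.right_cancel _ _ (s (b + 1))
      rw [hf, s_succ b hb, zero_vadd]
  refine ⟨Φ, f 0 0, hΦ0, iso_of_equiv (.ofBijective _ (bijective_vadd_section hinv hs htrans))
    fun u v => ?_⟩
  calc (v.2 + (if v.1 = 0 then f 0 0 else 0) + Φ (v.1 - u.1)) +ᵥ s (v.1 + 1)
      = v.2 +ᵥ C.op (s u.1) (s v.1) := by rw [← f_diag, add_assoc, ← hΦ, add_vadd, hf]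
    _ = C.op (u.2 +ᵥ s u.1) (v.2 +ᵥ s v.1) := by rw [hequiv, hfib (u.2 +ᵥ s u.1) _ (hinv _ _)]

end Twisted

section Classification

variable {X : Type*} {C : CycleSet X} {p : ℕ}

theorem IsHom.exists_iso_twisted_zmod (hC : C.Indecomposable) (hp : p.Prime)
    (hX : Nat.card X = p * p) {π : X → ZMod p} (hπ : C.IsHom (shift p) π)
    (hsurj : Function.Surjective π) (hfib : ∀ x y, π x = π y → C.op x = C.op y) :
    ∃ Φ : ZMod p → ZMod p, ∃ S, Φ 0 = 0 ∧ C.Iso (twisted Φ S) := by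
  have := Fact.mk hp
  have := Nat.finite_of_card_ne_zero (hX ▸ mul_ne_zero hp.ne_zero hp.ne_zero)
  have := hC.isPretransitive
  obtain ⟨Z, hZ, hZp, hZπ⟩ := hπ.exists_central_subgroup hC hp hX hfib
  let e : Multiplicative (ZMod p) ≃* Z :=
    mulEquivOfPrimeCardEq (p := p) (Nat.card_zmod p) hZp
  let _ : AddAction (ZMod p) X := .compHom X (MonoidHom.toAdditiveRight e.toMonoidHom)
  have : IsCancelVAdd (ZMod p) X := isCancelVAdd_iff_eq_zero_of_vadd_eq.2 fun a x hax => by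
    have he : e (.ofAdd a) = 1 := Subtype.ext
      (eq_one_of_mem_center_of_smul_eq_self (hZ (e (.ofAdd a)).2) hax)
    exact ofAdd_eq_one.1 ((map_eq_one_iff e e.injective).1 he)
  have hinv (a : ZMod p) (x : X) : π (a +ᵥ x) = π x := hZπ _ (e (.ofAdd a)).2 x
  refine hπ.exists_iso_twisted hsurj hfib hinv (fun a x y => ?_) fun x y =>
    exists_vadd_eq_of_card (by rw [hX, Nat.card_zmod]) hinv hsurj
  let s : C.permGroup := ⟨C.sigma x, C.sigma_mem_permGroup x⟩
  calc C.op x (a +ᵥ y) = (s * (e (.ofAdd a)).1) • y := rfl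
    _ = a +ᵥ C.op x y := by
      rw [Subgroup.mem_center_iff.1 (hZ (e (.ofAdd a)).2) s, mul_smul]
      rfl

theorem Indecomposable.exists_isHom_shift_of_card_retraction [Finite X] (hC : C.Indecomposable)
    (hp : p.Prime) (hret : Nat.card (Quotient (Setoid.ker C.op)) = p) :
    ∃ π : X → ZMod p, C.IsHom (shift p) π ∧ Function.Surjective π ∧
      ∀ x y, π x = π y ↔ C.op x = C.op y := by
  have hret_ind := hC.of_isHom C.isHom_retraction_mk Quotient.mk_surjective
  have : Nonempty (Quotient (Setoid.ker C.op)) := (Nat.card_pos_iff.1 (hret ▸ hp.pos)).1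
  obtain ⟨f, hf, hfop⟩ : C.retraction.Iso (shift p) :=
    hret ▸ hret_ind.iso_shift_of_op_eq_op (hret_ind.op_eq_op_of_prime_card hp hret)
  refine ⟨f ∘ Quotient.mk _, fun x y => hfop (.mk _ x) (.mk _ y),
    hf.surjective.comp Quotient.mk_surjective, fun x y => ?_⟩
  rw [Function.comp_apply, Function.comp_apply, hf.injective.eq_iff, Quotient.eq, Setoid.ker_def]

theorem irretractable_of_card_retraction_eq [Finite X]
    (h : Nat.card (Quotient (Setoid.ker C.op)) = Nat.card X) : C.Irretractable := by
  have hbij := (Nat.bijective_iff_surjective_and_card _).2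
    ⟨Quotient.mk_surjective (s := Setoid.ker C.op), h.symm⟩
  exact fun x y hxy => hbij.injective (Quotient.sound hxy)

theorem Indecomposable.iso_shift_or_iso_twisted (hC : C.Indecomposable) (hp : p.Prime)
    (hX : Nat.card X = p ^ 2) (hret : ¬ C.Irretractable) :
    C.Iso (shift (p ^ 2)) ∨ ∃ Φ : ZMod p → ZMod p, ∃ S,
      (∃ i j, Φ i ≠ Φ j) ∧ Φ 0 = 0 ∧ C.Iso (twisted Φ S) := by
  have hX0 : Nat.card X ≠ 0 := hX ▸ pow_ne_zero 2 hp.ne_zero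
  obtain ⟨_, _⟩ := Nat.card_ne_zero.1 hX0
  obtain ⟨k, hk, hcard⟩ := (Nat.dvd_prime_pow hp).1 <| hX ▸
    C.isHom_retraction_mk.card_dvd_card Quotient.mk_surjective hC
  interval_cases k
  · left
    have := (Nat.card_eq_one_iff_unique.1 (hcard.trans (pow_zero p))).1
    exact hX ▸ hC.iso_shift_of_op_eq_op fun x y =>
      Quotient.exact (s := Setoid.ker C.op) (Subsingleton.elim _ _)
  · right
    obtain ⟨π, hπ, hsurj, hfib⟩ :=
      hC.exists_isHom_shift_of_card_retraction hp (hcard.trans (pow_one p))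
    obtain ⟨Φ, S, hΦ0, hiso⟩ := hπ.exists_iso_twisted_zmod hC hp (hX.trans (sq p)) hsurj
      fun x y => (hfib x y).1
    refine ⟨Φ, S, ?_, hΦ0, hiso⟩
    by_contra! hconst
    have := Fact.mk hp
    obtain ⟨⟨x, hx⟩, ⟨y, hy⟩⟩ := And.intro (hsurj 0) (hsurj 1)
    have hxy := (hfib x y).2 (hiso.op_eq_op (twisted_op_eq_op_of_forall_eq hconst S) x y)
    exact zero_ne_one (hx.symm.trans (hxy.trans hy))
  · exact absurd (irretractable_of_card_retraction_eq (hcard.trans hX.symm)) hret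

end Classification

section TwistedIso

variable {p : ℕ} [Fact p.Prime]

section

variable {A B : Type*} [AddCommGroup A] [AddCommGroup B]

theorem fst_eq_of_twisted_op_eq {Φ : ZMod p → A} {S : A} (hΦ : ∃ i j, Φ i ≠ Φ j)
    {u v : ZMod p × A} (h : (twisted Φ S).op u = (twisted Φ S).op v) : u.1 = v.1 := by
  refine sub_eq_zero.1 (eq_zero_of_periodic (fun c => ?_) hΦ)
  have := congrArg Prod.snd (congrFun h (c + u.1, 0))
  simpa [twisted, add_sub_assoc] using this.symm

theorem IsIso.exists_apply_eq_add_of_twisted {Φ : ZMod p → A} {S : A} {Φ' : ZMod p → B} {S' : B}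
    {f : ZMod p × A → ZMod p × B} (hf : (twisted Φ S).IsIso (twisted Φ' S') f)
    (hΦ' : ∃ i j, Φ' i ≠ Φ' j) :
    ∃ (k : ZMod p) (h : ZMod p → A → B), ∀ b y, f (b, y) = (b + k, h b y) := by
  obtain ⟨hbij, hop⟩ := hf
  have fst_eq (b : ZMod p) (y : A) : (f (b, y)).1 = (f (b, 0)).1 :=
    fst_eq_of_twisted_op_eq hΦ' <| funext <| hbij.2.forall.2 fun v =>
      (hop (b, y) v).symm.trans (hop (b, 0) v)
  have fst_succ (b : ZMod p) : (f (b + 1, 0)).1 = (f (b, 0)).1 + 1 :=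
    (fst_eq _ _).symm.trans (congrArg Prod.fst (hop (b, 0) (b, 0)))
  refine ⟨(f (0, 0)).1, fun b y => (f (b, y)).2, fun b y => Prod.ext ?_ rfl⟩
  have := apply_add_mul_of_apply_add (f := fun b => (f (b, 0)).1) fst_succ 0 b
  rw [zero_add, mul_one] at this
  rw [fst_eq, this, add_comm]

end

variable {Φ Φ' : ZMod p → ZMod p} {S S' : ZMod p}

theorem Iso.exists_eq_mul_of_twisted (h0 : Φ 0 = 0) (h0' : Φ' 0 = 0)
    (hΦ' : ∃ i j, Φ' i ≠ Φ' j) (hiso : (twisted Φ S).Iso (twisted Φ' S')) :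
    ∃ α ≠ 0, S' = α * S ∧ ∀ i, Φ' i = α * Φ i := by
  obtain ⟨f, hf⟩ := hiso
  obtain ⟨k, h, f_apply⟩ := hf.exists_apply_eq_add_of_twisted hΦ'
  have h_op (b c y : ZMod p) : h (b + 1) (y + (if b = 0 then S else 0) + Φ c) =
      h b y + (if b + k = 0 then S' else 0) + Φ' c := by
    have := congrArg Prod.snd (hf.2 (b - c, 0) (b, y))
    simpa only [twisted_op, f_apply, add_sub_add_right_eq_sub, sub_sub_cancel] using this
  have h_add (b c y : ZMod p) : h b (y + Φ c) = h b y + Φ' c := by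
    have hc := h_op (b - 1) c (y - if b - 1 = 0 then S else 0)
    have hz := h_op (b - 1) 0 (y - if b - 1 = 0 then S else 0)
    rw [h0, h0', add_zero, add_zero] at hz
    rwa [← hz, sub_add_cancel, sub_add_cancel] at hc
  have exists_ne_zero : ∃ i, Φ' i ≠ 0 := by
    by_contra! hzero
    obtain ⟨i, j, hij⟩ := hΦ'
    exact hij ((hzero i).trans (hzero j).symm)
  obtain ⟨α, hα, h_linear, hΦ⟩ := exists_mul_of_apply_add_comp_eq h_add exists_ne_zero
  refine ⟨α, hα, ?_, hΦ⟩
  have h_succ (b : ZMod p) : h (b + 1) 0 + (if b = 0 then α * S else 0) =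
      h b 0 + (if b + k = 0 then S' else 0) := by
    have := h_op b 0 0
    rwa [h0, h0', add_zero, add_zero, zero_add, h_linear, mul_ite, mul_zero] at this
  -- Summing over `b` cancels the unknown values `h b 0`.
  have hsum := Finset.sum_congr (rfl : (Finset.univ : Finset (ZMod p)) = _) fun b _ => h_succ b
  have sum_shift : ∑ b, h (b + 1) 0 = ∑ b, h b 0 :=
    Equiv.sum_comp (Equiv.addRight (1 : ZMod p)) fun b => h b 0
  rw [Finset.sum_add_distrib, Finset.sum_add_distrib, sum_shift] at hsum
  simpa [add_eq_zero_iff_eq_neg] using (add_left_cancel hsum).symm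

theorem twisted_iso_twisted_iff (h0 : Φ 0 = 0) (h0' : Φ' 0 = 0) (hΦ' : ∃ i j, Φ' i ≠ Φ' j) :
    (twisted Φ S).Iso (twisted Φ' S') ↔ ∃ α ≠ 0, S' = α * S ∧ ∀ i, Φ' i = α * Φ i := by
  refine ⟨Iso.exists_eq_mul_of_twisted h0 h0' hΦ', ?_⟩
  rintro ⟨α, hα, rfl, hΦ⟩
  obtain rfl := funext hΦ
  exact twisted_iso_map Φ S
    (AddEquiv.ofBijective (AddMonoidHom.mulLeft α) (mulLeft_bijective₀ α hα))

end TwistedIso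

end CycleSet

theorem stmt8 {p : ℕ} (hp : p.Prime) {X : Type} (C : CycleSet X)
    (hcard : Nat.card X = p ^ 2) (hind : C.Indecomposable)
    (hretr : ∃ x y : X, x ≠ y ∧ C.op x = C.op y) :
    ((∃ D : CycleSet (ZMod (p ^ 2)),
        (∀ x y : ZMod (p ^ 2), D.op x y = y + 1) ∧ C.Iso D) ∨
     (∃ (Φ : ZMod p → ZMod p) (S : ZMod p), (∃ i j : ZMod p, Φ i ≠ Φ j) ∧ Φ 0 = 0 ∧
        ∃ D : CycleSet (ZMod p × ZMod p),
          (∀ a b x y : ZMod p,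
            D.op (a, x) (b, y) = (b + 1, y + (if b = 0 then S else 0) + Φ (b - a))) ∧
          C.Iso D)) ∧
    (∀ (Φ Φ' : ZMod p → ZMod p) (S S' : ZMod p),
      (∃ i j : ZMod p, Φ i ≠ Φ j) → Φ 0 = 0 →
      (∃ i j : ZMod p, Φ' i ≠ Φ' j) → Φ' 0 = 0 →
      ∀ (D D' : CycleSet (ZMod p × ZMod p)),
        (∀ a b x y : ZMod p,
          D.op (a, x) (b, y) = (b + 1, y + (if b = 0 then S else 0) + Φ (b - a))) →
        (∀ a b x y : ZMod p,
          D'.op (a, x) (b, y) = (b + 1, y + (if b = 0 then S' else 0) + Φ' (b - a))) →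
        (D.Iso D' ↔ ∃ α : ZMod p, α ≠ 0 ∧ S' = α * S ∧ ∀ i : ZMod p, Φ' i = α * Φ i)) := by
  have := Fact.mk hp
  have hirr : ¬ C.Irretractable := fun h =>
    let ⟨x, y, hne, hop⟩ := hretr
    hne (h x y hop)
  refine ⟨?_, fun Φ Φ' S S' _ h0 hΦ' h0' D D' hD hD' => ?_⟩
  · obtain h | ⟨Φ, S, hΦ, h0, h⟩ := hind.iso_shift_or_iso_twisted hp hcard hirr
    · exact .inl ⟨CycleSet.shift (p ^ 2), fun _ _ => rfl, h⟩
    · exact .inr ⟨Φ, S, hΦ, h0, CycleSet.twisted Φ S, fun _ _ _ _ => rfl, h⟩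
  · obtain rfl : D = CycleSet.twisted Φ S := CycleSet.ext_op fun u v => hD u.1 v.1 u.2 v.2
    obtain rfl : D' = CycleSet.twisted Φ' S' := CycleSet.ext_op fun u v => hD' u.1 v.1 u.2 v.2
    exact CycleSet.twisted_iso_twisted_iff h0 h0' hΦ'
end

section
/- Let (X,·) and (X,·′) be finite cycle set structures on the same set X, let φ be an automorphism of (X,·) and ψ an automorphism of (X,·′), and assume gcd(|𝒢(X,·)|·|𝒢(X,·′)|, ord(φ)·ord(ψ)) = 1. Then a bijection f : X → X is an isomorphism from the deformed cycle set (X,·_φ) to (X,·′_ψ) if and only if f is an isomorphism from (X,·) to (X,·′) and ψ = f∘φ∘f⁻¹. In particular, the automorphism group of (X,·_φ) is exactly the centralizer of φ in the automorphism group of (X,·). -/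
/-!
In the permutation brace `𝒢(X)`, adding `σ_x` is the map `g ↦ σ_{g x} g`. By (C1) these maps
commute, and if `𝒢(X)` is finite they generate a transitive monoid, hence an abelian group acting
transitively on `𝒢(X)`; so adding `σ_x` repeatedly `|𝒢(X)|` times is the identity.
Deforming `X` by `φ` multiplies the `k`-th multiple of `σ_x` by `φ ^ k`. By coprimality there is a
`k` divisible by both group orders with `φ ^ k = φ` and `ψ ^ k = ψ`, so that every `k`-th multiple
in the deformed cycle sets is `φ`, respectively `ψ`. Isomorphisms preserve multiples, so an
isomorphism of the deformed cycle sets intertwines `φ` and `ψ`.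
-/

section MulAction

variable {α : Type*}

theorem pow_card_smul_of_isPretransitive {G : Type*} [Group G] [IsMulCommutative G]
    [MulAction G α] [MulAction.IsPretransitive G α] (g : G) (a : α) :
    g ^ Nat.card α • a = a := by
  rw [← MulAction.index_stabilizer_of_transitive G a]
  exact (MulAction.stabilizer G a).pow_index_mem g

variable {M : Type*} [Monoid M] [IsMulCommutative M] [MulAction M α] [FaithfulSMul M α]
  [MulAction.IsPretransitive M α]

theorem isUnit_of_isPretransitive [Nonempty α] (m : M) : IsUnit m := by
  obtain ⟨a⟩ := ‹Nonempty α›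
  obtain ⟨n, hn⟩ := MulAction.exists_smul_eq M (m • a) a
  have mul_eq_one : n * m = 1 := by
    refine eq_of_smul_eq_smul (α := α) fun b => ?_
    obtain ⟨p, rfl⟩ := MulAction.exists_smul_eq M a b
    rw [smul_smul, mul_comm' (n * m) p, mul_smul, mul_smul, hn, one_smul]
  exact ⟨⟨m, n, (mul_comm' m n).trans mul_eq_one, mul_eq_one⟩, rfl⟩

theorem pow_card_smul_of_faithfulSMul_of_isPretransitive (m : M) (a : α) :
    m ^ Nat.card α • a = a := by
  have : Nonempty α := ⟨a⟩
  let : Group M := groupOfIsUnit (isUnit_of_isPretransitive (α := α))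
  exact pow_card_smul_of_isPretransitive m a

end MulAction

theorem semiconj₂_perm_pow {X : Type*} {op : X → X → X} {φ : Equiv.Perm X}
    (hφ : Function.Semiconj₂ φ op op) (k : ℕ) :
    Function.Semiconj₂ (φ ^ k : Equiv.Perm X) op op := by
  induction k with
  | zero => exact Function.Semiconj₂.id_left op
  | succ k ih =>
    rw [pow_succ']
    exact hφ.comp ih

namespace CycleSet

variable {X Y : Type*}

section Multiples

theorem permGroup_toSubmonoid (C : CycleSet X) [Finite C.permGroup] :
    C.permGroup.toSubmonoid = Submonoid.closure (Set.range C.sigma) := by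
  refine Subgroup.closure_toSubmonoid_of_isOfFinOrder ?_
  rintro _ ⟨x, rfl⟩
  exact Submonoid.isOfFinOrder_coe.2
    (isOfFinOrder_of_finite (⟨C.sigma x, C.sigma_mem_permGroup x⟩ : C.permGroup))

/-- Addition of `σ_x` in the brace `𝒢(X)`, expressed through the multiplication of `𝒢(X)` as the
map `g ↦ σ_{g x} g`. -/
noncomputable def addSigma (C : CycleSet X) (x : X) : Function.End C.permGroup := fun g =>
  ⟨C.sigma (g.1 x), C.sigma_mem_permGroup _⟩ * g

theorem coe_addSigma (C : CycleSet X) (x : X) (g : C.permGroup) :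
    (C.addSigma x g : Equiv.Perm X) = C.sigma (g.1 x) * g.1 :=
  rfl

theorem addSigma_mul_comm (C : CycleSet X) (x y : X) :
    C.addSigma x * C.addSigma y = C.addSigma y * C.addSigma x := by
  funext g
  apply Subtype.ext
  change C.sigma (C.op (g.1 y) (g.1 x)) * (C.sigma (g.1 y) * g.1) =
    C.sigma (C.op (g.1 x) (g.1 y)) * (C.sigma (g.1 x) * g.1)
  rw [← mul_assoc, ← mul_assoc, sigma_op_mul_sigma]

/-- The monoid of self-maps of `𝒢(X)` generated by the additions of the `σ_x`; for finite `𝒢(X)`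
it is the additive group of the brace `𝒢(X)` in its regular representation. -/
def addMonoid (C : CycleSet X) : Submonoid (Function.End C.permGroup) :=
  Submonoid.closure (Set.range C.addSigma)

theorem addSigma_mem_addMonoid (C : CycleSet X) (x : X) : C.addSigma x ∈ C.addMonoid :=
  Submonoid.subset_closure ⟨x, rfl⟩

instance (C : CycleSet X) : IsMulCommutative C.addMonoid := by
  refine Submonoid.isMulCommutative_closure _ ?_
  rintro _ ⟨x, rfl⟩ _ ⟨y, rfl⟩
  exact C.addSigma_mul_comm x y

theorem exists_addMonoid_smul_eq_mul (C : CycleSet X) (g : C.permGroup) {k : Equiv.Perm X}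
    (hk : k ∈ Submonoid.closure (Set.range C.sigma)) :
    ∃ m : C.addMonoid, (m • g : C.permGroup) = k * g.1 := by
  induction hk using Submonoid.closure_induction_left with
  | one => exact ⟨1, rfl⟩
  | mul_left _ hs k _ ih =>
    obtain ⟨y, rfl⟩ := hs
    obtain ⟨m, hm⟩ := ih
    let x := (m • g).1⁻¹ y
    have apply_x : (m • g).1 x = y := (m • g).1.apply_symm_apply y
    refine ⟨⟨C.addSigma x, C.addSigma_mem_addMonoid x⟩ * m, ?_⟩
    calc (C.addSigma x (m • g) : Equiv.Perm X)
      _ = C.sigma ((m • g).1 x) * (m • g).1 := C.coe_addSigma x (m • g)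
      _ = C.sigma y * k * g.1 := by rw [apply_x, hm, mul_assoc]

instance (C : CycleSet X) [Finite C.permGroup] :
    MulAction.IsPretransitive C.addMonoid C.permGroup where
  exists_smul_eq g h := by
    have hk : (h * g⁻¹ : Equiv.Perm X) ∈ Submonoid.closure (Set.range C.sigma) :=
      C.permGroup_toSubmonoid ▸ (h * g⁻¹).2
    obtain ⟨m, hm⟩ := C.exists_addMonoid_smul_eq_mul g hk
    exact ⟨m, Subtype.ext (hm.trans (inv_mul_cancel_right h.1 g.1))⟩

/-- The `k`-th multiple of `σ_x` in the additive group of the brace `𝒢(X)`, as a permutation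
of `X`. -/
noncomputable def nsmulSigma (C : CycleSet X) (x : X) (k : ℕ) : Equiv.Perm X :=
  ((C.addSigma x ^ k) 1 : C.permGroup)

theorem nsmulSigma_succ (C : CycleSet X) (x : X) (k : ℕ) :
    C.nsmulSigma x (k + 1) = C.sigma (C.nsmulSigma x k x) * C.nsmulSigma x k := by
  rw [nsmulSigma, pow_succ']
  rfl

theorem nsmulSigma_eq_one_of_card_dvd (C : CycleSet X) [Finite C.permGroup] (x : X) {k : ℕ}
    (hk : Nat.card C.permGroup ∣ k) : C.nsmulSigma x k = 1 := by
  obtain ⟨n, rfl⟩ := hk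
  let m : C.addMonoid := ⟨C.addSigma x, C.addSigma_mem_addMonoid x⟩
  have hm : (m ^ n) ^ Nat.card C.permGroup • (1 : C.permGroup) = 1 :=
    pow_card_smul_of_faithfulSMul_of_isPretransitive (m ^ n) 1
  rw [← pow_mul'] at hm
  exact congrArg Subtype.val hm

theorem apply_nsmulSigma {C : CycleSet X} {C' : CycleSet Y} {f : X → Y}
    (hf : Function.Semiconj₂ f C.op C'.op) (x : X) (k : ℕ) (y : X) :
    f (C.nsmulSigma x k y) = C'.nsmulSigma (f x) k (f y) := by
  induction k generalizing y with
  | zero => rfl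
  | succ k ih =>
    rw [nsmulSigma_succ, nsmulSigma_succ, Equiv.Perm.mul_apply, Equiv.Perm.mul_apply, ← ih, ← ih]
    exact hf _ _

end Multiples

section Deform

/-- The deformed cycle set `(X, ·_φ)`, with operation `x ·_φ y = φ (x · y)`. -/
def deform (C : CycleSet X) (φ : Equiv.Perm X) (hφ : Function.Semiconj₂ φ C.op C.op) :
    CycleSet X where
  op x y := φ (C.op x y)
  c1 x y z := by rw [← hφ, ← hφ, C.c1]
  c2 x := φ.bijective.comp (C.c2 x)
  c3 := φ.bijective.comp C.c3

theorem eq_deform {C D : CycleSet X} {φ : Equiv.Perm X} (hφ : Function.Semiconj₂ φ C.op C.op)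
    (hD : ∀ x y, D.op x y = φ (C.op x y)) : D = C.deform φ hφ := by
  cases D
  congr
  exact funext₂ hD

variable {C : CycleSet X} {C' : CycleSet Y} {φ : Equiv.Perm X} {ψ : Equiv.Perm Y}

theorem nsmulSigma_deform (hφ : Function.Semiconj₂ φ C.op C.op) (x : X) (k : ℕ) :
    (C.deform φ hφ).nsmulSigma x k = φ ^ k * C.nsmulSigma x k := by
  induction k with
  | zero => rfl
  | succ k ih =>
    ext y
    rw [nsmulSigma_succ, nsmulSigma_succ, ih, pow_succ']
    exact congrArg φ (semiconj₂_perm_pow hφ k _ _).symm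

theorem nsmulSigma_deform_of_card_dvd [Finite C.permGroup]
    (hφ : Function.Semiconj₂ φ C.op C.op) (x : X) {k : ℕ} (hk : Nat.card C.permGroup ∣ k) :
    (C.deform φ hφ).nsmulSigma x k = φ ^ k := by
  rw [nsmulSigma_deform, C.nsmulSigma_eq_one_of_card_dvd x hk, mul_one]

theorem semiconj_of_semiconj₂_deform [Finite C.permGroup] [Finite C'.permGroup]
    (hφ : Function.Semiconj₂ φ C.op C.op) (hψ : Function.Semiconj₂ ψ C'.op C'.op)
    (hcop : (Nat.card C.permGroup * Nat.card C'.permGroup).Coprime (orderOf φ * orderOf ψ))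
    {f : X → Y} (hf : Function.Semiconj₂ f (C.deform φ hφ).op (C'.deform ψ hψ).op) :
    Function.Semiconj f φ ψ := by
  obtain ⟨k, hk_zero, hk_one⟩ := Nat.chineseRemainder hcop 0 1
  have card_dvd := Nat.modEq_zero_iff_dvd.1 hk_zero
  have φ_pow : φ ^ k = φ := by
    simpa only [pow_one] using pow_eq_pow_iff_modEq.2 (hk_one.of_mul_right _)
  have ψ_pow : ψ ^ k = ψ := by
    simpa only [pow_one] using pow_eq_pow_iff_modEq.2 (hk_one.of_mul_left _)
  intro x
  have key := apply_nsmulSigma hf x k x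
  rwa [nsmulSigma_deform_of_card_dvd hφ x (dvd_of_mul_right_dvd card_dvd),
    nsmulSigma_deform_of_card_dvd hψ (f x) (dvd_of_mul_left_dvd card_dvd), φ_pow, ψ_pow] at key

theorem semiconj₂_deform_iff_of_semiconj (hφ : Function.Semiconj₂ φ C.op C.op)
    (hψ : Function.Semiconj₂ ψ C'.op C'.op) {f : X → Y} (hf : Function.Semiconj f φ ψ) :
    Function.Semiconj₂ f (C.deform φ hφ).op (C'.deform ψ hψ).op ↔
      Function.Semiconj₂ f C.op C'.op :=
  forall₂_congr fun x y => by
    change f (φ (C.op x y)) = ψ (C'.op (f x) (f y)) ↔ _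
    rw [hf, ψ.apply_eq_iff_eq]

theorem semiconj₂_deform_iff [Finite C.permGroup] [Finite C'.permGroup]
    (hφ : Function.Semiconj₂ φ C.op C.op) (hψ : Function.Semiconj₂ ψ C'.op C'.op)
    (hcop : (Nat.card C.permGroup * Nat.card C'.permGroup).Coprime (orderOf φ * orderOf ψ))
    {f : X → Y} :
    Function.Semiconj₂ f (C.deform φ hφ).op (C'.deform ψ hψ).op ↔
      Function.Semiconj₂ f C.op C'.op ∧ Function.Semiconj f φ ψ := by
  refine ⟨fun hf => ?_, fun ⟨hf, hfφ⟩ => (semiconj₂_deform_iff_of_semiconj hφ hψ hfφ).2 hf⟩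
  have hfφ := semiconj_of_semiconj₂_deform hφ hψ hcop hf
  exact ⟨(semiconj₂_deform_iff_of_semiconj hφ hψ hfφ).1 hf, hfφ⟩

end Deform

end CycleSet

theorem semiconj_iff_eq_permCongr {X Y : Type*} (f : X ≃ Y) (φ : Equiv.Perm X)
    (ψ : Equiv.Perm Y) : Function.Semiconj f φ ψ ↔ ψ = f.permCongr φ := by
  rw [Equiv.ext_iff, ← f.forall_congr_right]
  exact forall_congr' fun x => by
    rw [Equiv.permCongr_apply, Equiv.symm_apply_apply, eq_comm]

theorem stmt16_general {X Y : Type*} (C : CycleSet X) (C' : CycleSet Y) [Finite C.permGroup]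
    [Finite C'.permGroup] (φ : Equiv.Perm X) (ψ : Equiv.Perm Y)
    (hφ : ∀ x y : X, φ (C.op x y) = C.op (φ x) (φ y))
    (hψ : ∀ x y : Y, ψ (C'.op x y) = C'.op (ψ x) (ψ y))
    (hgcd : Nat.gcd (Nat.card C.permGroup * Nat.card C'.permGroup)
      (orderOf φ * orderOf ψ) = 1)
    (D : CycleSet X) (D' : CycleSet Y)
    (hD : ∀ x y : X, D.op x y = φ (C.op x y))
    (hD' : ∀ x y : Y, D'.op x y = ψ (C'.op x y)) :
    (∀ f : X ≃ Y,
      (∀ x y : X, f (D.op x y) = D'.op (f x) (f y)) ↔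
      ((∀ x y : X, f (C.op x y) = C'.op (f x) (f y)) ∧ ψ = f.permCongr φ)) ∧
    (∀ f : Equiv.Perm X,
      (∀ x y : X, f (D.op x y) = D.op (f x) (f y)) ↔
      ((∀ x y : X, f (C.op x y) = C.op (f x) (f y)) ∧ f * φ = φ * f)) := by
  obtain rfl := CycleSet.eq_deform hφ hD
  obtain rfl := CycleSet.eq_deform hψ hD'
  have hcop : (Nat.card C.permGroup).Coprime (orderOf φ) :=
    Nat.Coprime.coprime_mul_right (Nat.Coprime.coprime_mul_right_right hgcd)
  have hcop_self : (Nat.card C.permGroup * Nat.card C.permGroup).Coprime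
      (orderOf φ * orderOf φ) :=
    (hcop.mul_right hcop).mul_left (hcop.mul_right hcop)
  constructor
  · intro f
    rw [← semiconj_iff_eq_permCongr]
    exact CycleSet.semiconj₂_deform_iff hφ hψ hgcd
  · intro f
    rw [Equiv.ext_iff]
    exact CycleSet.semiconj₂_deform_iff hφ hφ hcop_self

theorem stmt16 {X : Type*} [Finite X] (C C' : CycleSet X) (φ ψ : Equiv.Perm X)
    (hφ : ∀ x y : X, φ (C.op x y) = C.op (φ x) (φ y))
    (hψ : ∀ x y : X, ψ (C'.op x y) = C'.op (ψ x) (ψ y))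
    (hgcd : Nat.gcd (Nat.card C.permGroup * Nat.card C'.permGroup)
      (orderOf φ * orderOf ψ) = 1)
    (D D' : CycleSet X)
    (hD : ∀ x y : X, D.op x y = φ (C.op x y))
    (hD' : ∀ x y : X, D'.op x y = ψ (C'.op x y)) :
    (∀ f : Equiv.Perm X,
      (∀ x y : X, f (D.op x y) = D'.op (f x) (f y)) ↔
      ((∀ x y : X, f (C.op x y) = C'.op (f x) (f y)) ∧ ψ = f * φ * f⁻¹)) ∧
    (∀ f : Equiv.Perm X,
      (∀ x y : X, f (D.op x y) = D.op (f x) (f y)) ↔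
      ((∀ x y : X, f (C.op x y) = C.op (f x) (f y)) ∧ f * φ = φ * f)) := by
  exact stmt16_general C C' φ ψ hφ hψ hgcd D D' hD hD'
end
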